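/- arXiv:1912.10033 — 2 statements merged into one kernel-verified Lean document; each statement's English description precedes it below -/
import Mathlib

section
/- Let d ≥ 3, let a₁, …, a_d ∈ ℂ be nonzero complex constants, and let α₁, …, α_d ∈ ℂ[x] be nonzero polynomials satisfying deg α₁ > deg α₂ > deg α₃ ≥ deg α₄ ≥ ⋯ ≥ deg α_d and the non-degeneracy condition that α_i/α_j is not a (nonzero) complex constant for all i ≠ j. Define G_n = a₁·α₁ⁿ + ⋯ + a_d·α_dⁿ ∈ ℂ[x]. If for some n ≥ 0, some integer m > deg α₁, and some polynomial h ∈ ℂ[x] with deg h ≥ 2 one has G_n = h^m, then n ≤ d·(d+1)·(deg α₁ + deg α₂ + ⋯ + deg α_d). -/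
open Polynomial in
/-- The Wronskian matrix of a family of polynomials. -/
noncomputable def wronskMat {e : ℕ} (f : Fin e → ℂ[X]) : Matrix (Fin e) (Fin e) ℂ[X] :=
  Matrix.of fun k i => derivative^[(k : ℕ)] (f i)

open Polynomial in
theorem wronskMat_det_ne_zero {e : ℕ} (f : Fin e → ℂ[X]) (hf : LinearIndependent ℂ f) :
    (wronskMat f).det ≠ 0 := by
  classical
  intro h0
  obtain ⟨c, hc0, hc⟩ := Matrix.exists_vecMul_eq_zero_iff.mpr h0
  have hc' : ∀ i, ∑ k : Fin e, c k * derivative^[(k : ℕ)] (f i) = 0 := by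
    intro i
    have := congrFun hc i
    simpa [Matrix.vecMul, dotProduct, wronskMat] using this
  have hne : (Finset.univ.filter fun k => c k ≠ 0).Nonempty := by
    obtain ⟨k, hk⟩ := Function.ne_iff.mp hc0
    exact ⟨k, by simpa using hk⟩
  obtain ⟨K, hK, hKmax⟩ := Finset.exists_maximal hne
  have hK0 : c K ≠ 0 := by simpa using hK
  have hmax : ∀ k, K < k → c k = 0 := by
    intro k hk
    by_contra hck
    exact absurd (hKmax (by simpa using hck) hk.le) (not_le.mpr hk)
  obtain ⟨p, hp⟩ : ∃ p, (c K).eval p ≠ 0 := by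
    by_contra! hcon
    exact hK0 (Polynomial.funext (by simpa using hcon))
  -- a combination vanishing to order K at p
  let L : (Fin e → ℂ) →ₗ[ℂ] (Fin (K : ℕ) → ℂ) :=
    { toFun := fun v k => ∑ i, v i * (derivative^[(k : ℕ)] (f i)).eval p
      map_add' := by
        intro v w; ext k; simp [add_mul, Finset.sum_add_distrib]
      map_smul' := by
        intro r v; ext k; simp [Finset.mul_sum, mul_assoc] }
  have hker : L.ker ≠ ⊥ := by
    apply LinearMap.ker_ne_bot_of_finrank_lt
    simp
  obtain ⟨v, hv, hv0⟩ := Submodule.exists_mem_ne_zero_of_ne_bot hker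
  have hvL : ∀ k : Fin (K : ℕ), ∑ i, v i * (derivative^[(k : ℕ)] (f i)).eval p = 0 := by
    intro k
    exact congrFun (LinearMap.mem_ker.mp hv) k
  set F : ℂ[X] := ∑ i, v i • f i with hF
  have hFne : F ≠ 0 := by
    intro hF0
    exact hv0 (funext (Fintype.linearIndependent_iff.mp hf v hF0))
  have hder : ∀ k, derivative^[k] F = ∑ i, v i • derivative^[k] (f i) := by
    intro k
    rw [hF, iterate_derivative_sum]
    simp [iterate_derivative_smul]
  have hvan : ∀ k, k < (K : ℕ) → (derivative^[k] F).eval p = 0 := by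
    intro k hk
    rw [hder, eval_finsetSum]
    simpa using hvL ⟨k, hk⟩
  have hode : ∑ k : Fin e, c k * derivative^[(k : ℕ)] F = 0 := by
    simp_rw [hder, Finset.mul_sum]
    rw [Finset.sum_comm]
    apply Finset.sum_eq_zero
    intro i _
    simp_rw [mul_smul_comm]
    rw [← Finset.smul_sum, hc', smul_zero]
  set N := rootMultiplicity p F with hN
  have hdvdF : (X - C p) ^ N ∣ F := pow_rootMultiplicity_dvd F p
  have hKN : (K : ℕ) ≤ N := by
    by_contra! hlt
    have : N < rootMultiplicity p F := by
      rw [lt_rootMultiplicity_iff_isRoot_iterate_derivative hFne]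
      intro k hk
      exact hvan k (by omega)
    omega
  have hdvd : (X - C p) ^ (N - K + 1) ∣ c K * derivative^[(K : ℕ)] F := by
    have h1 : c K * derivative^[(K : ℕ)] F
        = - ∑ k ∈ Finset.univ.erase K, c k * derivative^[(k : ℕ)] F := by
      rw [← Finset.add_sum_erase _ _ (Finset.mem_univ K)] at hode
      exact eq_neg_of_add_eq_zero_left hode
    rw [h1, dvd_neg]
    apply Finset.dvd_sum
    intro k hk
    rcases lt_or_gt_of_ne (Finset.ne_of_mem_erase hk) with hlt | hgt
    · apply Dvd.dvd.mul_left
      refine (pow_dvd_pow _ ?_).trans (pow_sub_dvd_iterate_derivative_of_pow_dvd (k : ℕ) hdvdF)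
      have : (k : ℕ) < K := hlt
      omega
    · simp [hmax k hgt]
  have hcop : IsCoprime ((X - C p) ^ (N - K + 1)) (c K) := by
    apply IsCoprime.pow_left
    rw [(irreducible_X_sub_C p).coprime_iff_not_dvd, dvd_iff_isRoot]
    exact hp
  have hdvd2 := hcop.dvd_of_dvd_mul_left hdvd
  have : N < rootMultiplicity p F := by
    rw [lt_rootMultiplicity_iff_isRoot_iterate_derivative hFne]
    intro k hk
    rcases lt_or_ge k (K : ℕ) with hlt | hge
    · exact hvan k hlt
    · have h2 := pow_sub_dvd_iterate_derivative_of_pow_dvd (k - K) hdvd2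
      rw [← Function.iterate_add_apply, Nat.sub_add_cancel hge] at h2
      rw [← dvd_iff_isRoot]
      refine (dvd_pow_self _ ?_).trans h2
      omega
  omega

open Polynomial in
theorem wronskMat_natDegree_le {e : ℕ} (f : Fin e → ℂ[X]) :
    (wronskMat f).det.natDegree ≤ ∑ i, (f i).natDegree := by
  rw [Matrix.det_apply]
  apply natDegree_sum_le_of_forall_le
  intro σ _
  refine (natDegree_smul_le _ _).trans ?_
  refine (natDegree_prod_le _ _).trans ?_
  apply Finset.sum_le_sum
  intro i _
  exact (natDegree_iterate_derivative _ _).trans (Nat.sub_le _ _)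

open Polynomial in
theorem dvd_wronskMat_det {e : ℕ} (f : Fin e → ℂ[X]) (p : ℂ) (s : Fin e → ℕ)
    (hs : ∀ i, (X - C p) ^ s i ∣ f i) :
    (X - C p) ^ (∑ i, (s i - (e - 1))) ∣ (wronskMat f).det := by
  rw [Matrix.det_apply]
  apply Finset.dvd_sum
  intro σ _
  rw [Units.smul_def, zsmul_eq_mul]
  apply Dvd.dvd.mul_left
  rw [← Finset.prod_pow_eq_pow_sum]
  apply Finset.prod_dvd_prod_of_dvd
  intro i _
  refine (pow_dvd_pow _ ?_).trans
    (pow_sub_dvd_iterate_derivative_of_pow_dvd ((σ i : Fin e) : ℕ) (hs i))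
  have := (σ i).isLt
  omega

open Polynomial in
theorem wronskMat_det_update {e : ℕ} (f : Fin e → ℂ[X]) (j : Fin e) :
    (wronskMat (Function.update f j (∑ i, f i))).det = (wronskMat f).det := by
  have := Matrix.det_updateCol_sum (wronskMat f) j (fun _ => 1)
  simp only [one_smul] at this
  rw [← this]
  congr 1
  ext1 k i
  by_cases hij : i = j
  · subst hij
    simp [wronskMat, iterate_derivative_sum]
  · simp [wronskMat, hij]

open Polynomial in
theorem sum_rootMult {f : ℂ[X]} (S : Finset ℂ) (hS : f.roots.toFinset ⊆ S) :
    ∑ p ∈ S, rootMultiplicity p f = f.natDegree := by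
  rw [← IsAlgClosed.card_roots_eq_natDegree, ← Multiset.toFinset_sum_count_eq]
  simp_rw [count_roots]
  symm
  apply Finset.sum_subset hS
  intro p _ hp
  rw [← count_roots, Multiset.count_eq_zero]
  exact fun h => hp (Multiset.mem_toFinset.mpr h)

open Polynomial in
theorem sum_rootMult_sub {f : ℂ[X]} (S : Finset ℂ) (hS : f.roots.toFinset ⊆ S) (k : ℕ) :
    f.natDegree ≤ ∑ p ∈ S, (rootMultiplicity p f - k) + k * f.roots.toFinset.card := by
  rw [← sum_rootMult S hS]
  have h2 : k * f.roots.toFinset.card = ∑ p ∈ S, if p ∈ f.roots.toFinset then k else 0 := by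
    rw [← Finset.sum_filter, Finset.sum_const, smul_eq_mul, mul_comm]
    congr 2
    ext p
    simp only [Finset.mem_filter]
    exact ⟨fun h => ⟨hS h, h⟩, fun h => h.2⟩
  rw [h2, ← Finset.sum_add_distrib]
  apply Finset.sum_le_sum
  intro p _
  split_ifs with h
  · omega
  · have : rootMultiplicity p f = 0 := by
      rw [← count_roots, Multiset.count_eq_zero]
      exact fun h' => h (Multiset.mem_toFinset.mpr h')
    omega

open Polynomial in
/-- A several-term Mason–Stothers inequality. -/
theorem multi_abc {e : ℕ} (f : Fin e → ℂ[X]) (hf : LinearIndependent ℂ f)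
    (hcop : ∀ p : ℂ, ∃ j, (f j).eval p ≠ 0) (hF : ∑ i, f i ≠ 0) :
    (∑ i, f i).natDegree ≤ (e - 1) *
      (∑ i, (f i).roots.toFinset.card + (∑ i, f i).roots.toFinset.card) := by
  classical
  set F := ∑ i, f i with hFdef
  have hW := wronskMat_det_ne_zero f hf
  set W := (wronskMat f).det with hWdef
  set S : Finset ℂ := (Finset.univ.biUnion fun i => (f i).roots.toFinset) ∪ F.roots.toFinset ∪
    W.roots.toFinset with hS
  have hloc : ∀ p, ∑ i, (rootMultiplicity p (f i) - (e - 1)) + (rootMultiplicity p F - (e - 1))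
      ≤ rootMultiplicity p W := by
    intro p
    obtain ⟨j, hj⟩ := hcop p
    rw [le_rootMultiplicity_iff hW]
    have := dvd_wronskMat_det (Function.update f j F) p
      (fun i => rootMultiplicity p (Function.update f j F i))
      (fun i => pow_rootMultiplicity_dvd _ _)
    rw [wronskMat_det_update] at this
    convert this using 2
    rw [← Finset.add_sum_erase _ _ (Finset.mem_univ j),
      ← Finset.add_sum_erase (a := j) Finset.univ
        (fun i => rootMultiplicity p (Function.update f j F i) - (e - 1)) (Finset.mem_univ j)]
    have h0 : rootMultiplicity p (f j) = 0 := rootMultiplicity_eq_zero hj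
    rw [h0, Function.update_self]
    have : ∑ i ∈ Finset.univ.erase j, (rootMultiplicity p (Function.update f j F i) - (e - 1))
        = ∑ i ∈ Finset.univ.erase j, (rootMultiplicity p (f i) - (e - 1)) := by
      apply Finset.sum_congr rfl
      intro i hi
      rw [Function.update_of_ne (Finset.ne_of_mem_erase hi)]
    rw [this]
    omega
  have hsum := Finset.sum_le_sum (s := S) (fun p _ => hloc p)
  rw [Finset.sum_add_distrib, Finset.sum_comm] at hsum
  rw [sum_rootMult S (f := W) Finset.subset_union_right] at hsum
  have hdeg := wronskMat_natDegree_le f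
  rw [← hWdef] at hdeg
  have h1 : ∑ i, (f i).natDegree ≤ ∑ i, (∑ p ∈ S, (rootMultiplicity p (f i) - (e - 1))
      + (e - 1) * (f i).roots.toFinset.card) := by
    apply Finset.sum_le_sum
    intro i _
    apply sum_rootMult_sub
    refine Finset.Subset.trans ?_ Finset.subset_union_left
    refine Finset.Subset.trans ?_ Finset.subset_union_left
    exact Finset.subset_biUnion_of_mem (fun i => (f i).roots.toFinset) (Finset.mem_univ i)
  rw [Finset.sum_add_distrib, ← Finset.mul_sum] at h1
  have h2 := sum_rootMult_sub (f := F) S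
    (Finset.subset_union_right.trans Finset.subset_union_left) (e - 1)
  rw [mul_add]
  omega

open Polynomial in
theorem exists_common_factor {e : ℕ} (α : Fin e → ℂ[X]) (i₀ : Fin e) (h0 : α i₀ ≠ 0) :
    ∃ (g : ℂ[X]) (β : Fin e → ℂ[X]), g ≠ 0 ∧ (∀ i, α i = g * β i) ∧
      ∀ p : ℂ, ∃ j, (β j).eval p ≠ 0 := by
  set I := Ideal.span (Set.range α) with hI
  obtain ⟨g, hg⟩ := (IsPrincipalIdealRing.principal I).principal
  have hmem : ∀ i, α i ∈ I := fun i => Ideal.subset_span ⟨i, rfl⟩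
  have hdvd : ∀ i, g ∣ α i := by
    intro i
    have := hmem i
    rw [hg] at this
    exact Ideal.mem_span_singleton.mp this
  choose β hβ using hdvd
  have hg0 : g ≠ 0 := by
    rintro rfl
    exact h0 (by simpa using hβ i₀)
  refine ⟨g, β, hg0, hβ, ?_⟩
  have hgI : g ∈ I := by
    rw [hg]; exact Ideal.mem_span_singleton_self g
  obtain ⟨u, hu⟩ := Ideal.mem_span_range_iff_exists_fun.mp hgI
  have h1 : ∑ i, u i * β i = 1 := by
    apply mul_left_cancel₀ hg0
    rw [mul_one, Finset.mul_sum]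
    conv_rhs => rw [← hu]
    apply Finset.sum_congr rfl
    intro i _
    rw [hβ i]; ring
  intro p
  by_contra! hcon
  have := congrArg (eval p) h1
  rw [eval_finsetSum] at this
  simp [hcon] at this

open Polynomial in
theorem roots_pow_card_le (β : ℂ[X]) (c : ℂ) (n : ℕ) :
    (C c * β ^ n).roots.toFinset.card ≤ β.natDegree := by
  have : (C c * β ^ n).roots.toFinset ⊆ β.roots.toFinset := by
    intro p hp
    simp only [Multiset.mem_toFinset, mem_roots'] at hp ⊢
    obtain ⟨h1, h2⟩ := hp
    have hc : c ≠ 0 := by rintro rfl; simp at h1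
    have hr : (eval p β) ^ n = 0 := by simpa [hc] using h2
    have hn : n ≠ 0 := by rintro rfl; simp at hr
    refine ⟨?_, by simpa [hn] using hr⟩
    rintro rfl
    simp [hn] at h1
  calc _ ≤ β.roots.toFinset.card := Finset.card_le_card this
    _ ≤ β.roots.card := Multiset.toFinset_card_le _
    _ ≤ _ := card_roots' _

open Polynomial in
theorem indep_bound {e : ℕ} (α : Fin e → ℂ[X]) (hα : ∀ i, α i ≠ 0) (c : Fin e → ℂ)
    (hc : ∀ i, c i ≠ 0) (n m : ℕ) (hli : LinearIndependent ℂ fun i => α i ^ n)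
    (i₀ i₁ : Fin e) (hlt : (α i₁).natDegree < (α i₀).natDegree) (hem : e ≤ m)
    (h : ℂ[X]) (hh0 : h ≠ 0) (hdeg : m * h.natDegree = n * (α i₀).natDegree)
    (heq : ∑ i, C (c i) * α i ^ n = h ^ m) :
    n ≤ e * (e - 1) * ∑ i, (α i).natDegree := by
  classical
  obtain ⟨g, β, hg0, hβ, hcop⟩ := exists_common_factor α i₀ (hα i₀)
  have hβ0 : ∀ i, β i ≠ 0 := by
    intro i hi
    exact hα i (by rw [hβ i, hi, mul_zero])
  set f : Fin e → ℂ[X] := fun i => C (c i) * β i ^ n with hf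
  have hgF : g ^ n * ∑ i, f i = h ^ m := by
    rw [← heq, Finset.mul_sum]
    apply Finset.sum_congr rfl
    intro i _
    simp only [hf]
    rw [hβ i]; ring
  have hF0 : ∑ i, f i ≠ 0 := by
    intro h0
    rw [h0, mul_zero] at hgF
    exact pow_ne_zero m hh0 hgF.symm
  have hfli : LinearIndependent ℂ f := by
    rw [Fintype.linearIndependent_iff] at hli ⊢
    intro v hv i
    have := hli (fun i => v i * c i) (by
      have h2 : g ^ n * ∑ i, v i • f i = 0 := by rw [hv, mul_zero]
      rw [← h2, Finset.mul_sum]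
      apply Finset.sum_congr rfl
      intro i _
      simp only [hf]
      rw [hβ i, smul_eq_C_mul, smul_eq_C_mul, C_mul]; ring) i
    simpa [hc i] using this
  have hfcop : ∀ p : ℂ, ∃ j, (f j).eval p ≠ 0 := by
    intro p
    obtain ⟨j, hj⟩ := hcop p
    exact ⟨j, by simp [hf, hc j, hj]⟩
  have habc := multi_abc f hfli hfcop hF0
  set F := ∑ i, f i with hF
  have hr1 : ∑ i, (f i).roots.toFinset.card ≤ ∑ i, (β i).natDegree :=
    Finset.sum_le_sum fun i _ => roots_pow_card_le _ _ _
  have hd : ∀ i, (α i).natDegree = g.natDegree + (β i).natDegree := by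
    intro i
    rw [hβ i, natDegree_mul hg0 (hβ0 i)]
  have hsumd : ∑ i, (β i).natDegree + g.natDegree ≤ ∑ i, (α i).natDegree := by
    simp_rw [hd]
    rw [Finset.sum_add_distrib]
    have : g.natDegree ≤ ∑ _i : Fin e, g.natDegree :=
      Finset.single_le_sum (f := fun _ : Fin e => g.natDegree) (fun _ _ => Nat.zero_le _)
        (Finset.mem_univ i₀)
    omega
  have hdegF : n * g.natDegree + F.natDegree = n * (α i₀).natDegree := by
    have := congrArg natDegree hgF
    rw [natDegree_mul (pow_ne_zero n hg0) hF0, natDegree_pow, natDegree_pow] at this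
    omega
  have hnF : n ≤ F.natDegree := by
    have h1 := hd i₁
    have h2 : n * (g.natDegree + 1) ≤ n * (α i₀).natDegree := Nat.mul_le_mul_left _ (by omega)
    rw [mul_add] at h2
    omega
  set T := F.roots.toFinset \ g.roots.toFinset with hT
  have hr2 : F.roots.toFinset.card ≤ g.natDegree + T.card := by
    have h1 : F.roots.toFinset ⊆ g.roots.toFinset ∪ T := by
      intro p hp
      by_cases hpg : p ∈ g.roots.toFinset
      · exact Finset.mem_union_left _ hpg
      · exact Finset.mem_union_right _ (Finset.mem_sdiff.mpr ⟨hp, hpg⟩)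
    have h2 := (Finset.card_le_card h1).trans (Finset.card_union_le _ _)
    have h3 := (Multiset.toFinset_card_le g.roots).trans (card_roots' g)
    omega
  have hT2 : m * T.card ≤ F.natDegree := by
    rw [← sum_rootMult F.roots.toFinset (Finset.Subset.refl _)]
    have h1 : ∑ p ∈ T, m ≤ ∑ p ∈ T, rootMultiplicity p F := by
      apply Finset.sum_le_sum
      intro p hp
      obtain ⟨hp1, hp2⟩ := Finset.mem_sdiff.mp hp
      rw [Multiset.mem_toFinset, mem_roots hF0] at hp1
      rw [Multiset.mem_toFinset, mem_roots hg0] at hp2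
      have hm0 := congrArg (rootMultiplicity p) hgF
      have hgn : ¬ (g ^ n).IsRoot p := by
        intro hr
        have hr' : (eval p g) ^ n = 0 := by simpa using hr
        exact hp2 ((fun hz : (eval p g) ^ n = 0 => by by_contra hne; exact pow_ne_zero n hne hz) hr')
      rw [rootMultiplicity_mul (by rw [hgF]; exact pow_ne_zero m hh0),
        rootMultiplicity_eq_zero hgn, zero_add] at hm0
      have hpos : 0 < rootMultiplicity p F := (rootMultiplicity_pos hF0).mpr hp1
      have hpw : rootMultiplicity p (h ^ m) = m * rootMultiplicity p h := by
        rw [← count_roots, ← count_roots, roots_pow, Multiset.count_nsmul]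
      rw [hpw] at hm0
      rw [hm0] at hpos ⊢
      exact Nat.le_mul_of_pos_right _ (Nat.pos_of_mul_pos_left hpos)
    rw [Finset.sum_const, smul_eq_mul, mul_comm] at h1
    exact h1.trans (Finset.sum_le_sum_of_subset Finset.sdiff_subset)
  set x := F.natDegree
  set y := T.card
  set A := ∑ i, (α i).natDegree
  have hx : x ≤ (e - 1) * (A + y) := habc.trans (Nat.mul_le_mul_left _ (by omega))
  obtain ⟨k, rfl⟩ : ∃ k, e = k + 1 := ⟨e - 1, by have := i₀.isLt; omega⟩
  simp only [Nat.add_sub_cancel] at hx ⊢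
  have hy : (k + 1) * y ≤ x := (Nat.mul_le_mul_right _ hem).trans hT2
  nlinarith [Nat.mul_le_mul_left (k + 1) hx, Nat.mul_le_mul_left k hy]

open Polynomial in
theorem exists_indep_rep {d : ℕ} (v : Fin d → ℂ[X]) (a : Fin d → ℂ) :
    ∃ (e : ℕ) (σ : Fin e → Fin d) (c : Fin e → ℂ), Function.Injective σ ∧ (∀ i, c i ≠ 0) ∧
      LinearIndependent ℂ (fun i => v (σ i)) ∧ ∑ i, C (c i) * v (σ i) = ∑ i, C (a i) * v i := by
  classical
  obtain ⟨κ, τ, hinj, hspan, hli⟩ := exists_linearIndependent' ℂ v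
  have : Finite κ := Finite.of_injective τ hinj
  have := Fintype.ofFinite κ
  have hmem : ∑ i, C (a i) * v i ∈ Submodule.span ℂ (Set.range (v ∘ τ)) := by
    rw [hspan, Submodule.mem_span_range_iff_exists_fun]
    exact ⟨a, by simp [smul_eq_C_mul]⟩
  obtain ⟨c, hc⟩ := (Submodule.mem_span_range_iff_exists_fun ℂ).mp hmem
  let J := {k : κ // c k ≠ 0}
  let E := (Fintype.equivFin J).symm
  refine ⟨Fintype.card J, fun i => τ (E i).1, fun i => c (E i).1, ?_, fun i => (E i).2, ?_, ?_⟩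
  · exact hinj.comp (Subtype.val_injective.comp E.injective)
  · exact hli.comp (fun i => (E i).1) (Subtype.val_injective.comp E.injective)
  · rw [← hc, Equiv.sum_comp E (fun k : J => C (c k.1) * v (τ k.1))]
    have h1 : ∑ k, c k • (v ∘ τ) k = ∑ k ∈ Finset.univ.filter (fun k => c k ≠ 0),
        C (c k) * v (τ k) := by
      rw [Finset.sum_filter]
      apply Finset.sum_congr rfl
      intro k _
      split_ifs with hk
      · simp [smul_eq_C_mul]
      · simp only [not_not] at hk
        simp [hk]
    rw [h1]
    symm
    apply Finset.sum_subtype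
    simp

open Polynomial in
theorem first_bound (α r h : ℂ[X]) (a : ℂ) (n m : ℕ) (hD : 0 < α.natDegree) (hn : 0 < n)
    (hm : α.natDegree < m) (hr0 : r ≠ 0) (hr : r.natDegree + n ≤ n * α.natDegree)
    (hh0 : h ≠ 0) (hdeg : m * h.natDegree = n * α.natDegree)
    (heq : C a * α ^ n + r = h ^ m) : n ≤ α.natDegree * m := by
  obtain ⟨k, rfl⟩ : ∃ k, m = k + 1 := ⟨m - 1, by omega⟩
  obtain ⟨l, rfl⟩ : ∃ l, n = l + 1 := ⟨n - 1, by omega⟩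
  set W : ℂ[X] := C ((k + 1 : ℕ) : ℂ) * derivative h * α - C ((l + 1 : ℕ) : ℂ) * h * derivative α
    with hW
  set V : ℂ[X] := derivative r * α - C ((l + 1 : ℕ) : ℂ) * r * derivative α with hV
  have hα0 : α ≠ 0 := by rintro rfl; simp at hD
  have hid : h ^ k * W = V := by
    have hrr : r = h ^ (k + 1) - C a * α ^ (l + 1) := by rw [← heq]; ring
    rw [hV, hW, hrr]
    simp only [derivative_sub, derivative_mul, derivative_C, derivative_pow, Nat.add_sub_cancel]
    ring
  have hV0 : V ≠ 0 := by
    intro h0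
    have h1 : derivative r * α = C ((l + 1 : ℕ) : ℂ) * r * derivative α := sub_eq_zero.mp h0
    have h2 := congrArg leadingCoeff h1
    simp only [leadingCoeff_mul, leadingCoeff_derivative, leadingCoeff_C] at h2
    have hlr : r.leadingCoeff ≠ 0 := leadingCoeff_ne_zero.mpr hr0
    have hla : α.leadingCoeff ≠ 0 := leadingCoeff_ne_zero.mpr hα0
    have h3 : (r.natDegree : ℂ) = ((l + 1 : ℕ) : ℂ) * (α.natDegree : ℂ) := by
      apply mul_left_cancel₀ (mul_ne_zero hlr hla)
      linear_combination h2
    have h4 : r.natDegree = (l + 1) * α.natDegree := by exact_mod_cast h3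
    omega
  have hW0 : W ≠ 0 := by
    intro h0
    rw [h0, mul_zero] at hid
    exact hV0 hid.symm
  have hVd : V.natDegree ≤ r.natDegree + α.natDegree := by
    refine (natDegree_sub_le _ _).trans (max_le ?_ ?_)
    · refine natDegree_mul_le.trans ?_
      rw [natDegree_derivative]; omega
    · refine natDegree_mul_le.trans ?_
      have := natDegree_C_mul_le ((l + 1 : ℕ) : ℂ) r
      rw [natDegree_derivative]; omega
  have hl := congrArg natDegree hid
  rw [natDegree_mul (pow_ne_zero k hh0) hW0, natDegree_pow] at hl
  set D := α.natDegree
  set H := h.natDegree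
  have h1 : l + 1 ≤ H + D := by
    have : (k + 1) * H = k * H + H := by ring
    omega
  obtain ⟨s, rfl⟩ : ∃ s, k = D + s := ⟨k - D, by omega⟩
  nlinarith [Nat.mul_le_mul_left (D + s + 1) h1, Nat.zero_le ((l + 1) * s)]

open Polynomial in
theorem stmt4 (d : ℕ) (hd : 3 ≤ d)
    (a : Fin d → ℂ) (ha : ∀ i, a i ≠ 0)
    (α : Fin d → Polynomial ℂ) (hα : ∀ i, α i ≠ 0)
    (hdeg12 : (α ⟨1, by omega⟩).natDegree < (α ⟨0, by omega⟩).natDegree)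
    (hdeg23 : (α ⟨2, by omega⟩).natDegree < (α ⟨1, by omega⟩).natDegree)
    (hdegmono : ∀ i j : Fin d, 2 ≤ (i : ℕ) → i ≤ j → (α j).natDegree ≤ (α i).natDegree)
    (hnondeg : ∀ i j : Fin d, i ≠ j → ∀ c : ℂ, c ≠ 0 → α i ≠ Polynomial.C c * α j)
    (n m : ℕ) (hm : (α ⟨0, by omega⟩).natDegree < m)
    (h : Polynomial ℂ) (hh : 2 ≤ h.natDegree)
    (heq : ∑ i, Polynomial.C (a i) * (α i) ^ n = h ^ m) :
    n ≤ d * (d + 1) * ∑ i, (α i).natDegree := by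
  classical
  rcases Nat.eq_zero_or_pos n with hn0 | hn
  · omega
  have hh0 : h ≠ 0 := by rintro rfl; simp at hh
  set i0 : Fin d := ⟨0, by omega⟩ with hi0
  set i1 : Fin d := ⟨1, by omega⟩ with hi1
  set i2 : Fin d := ⟨2, by omega⟩ with hi2
  have hlt1 : ∀ i, i ≠ i0 → i ≠ i1 → (α i).natDegree < (α i1).natDegree := by
    intro i h0 h1
    have hi : 2 ≤ (i : ℕ) := by
      have h0' : (i : ℕ) ≠ 0 := fun hx => h0 (Fin.ext hx)
      have h1' : (i : ℕ) ≠ 1 := fun hx => h1 (Fin.ext hx)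
      omega
    exact (hdegmono i2 i (le_refl 2) hi).trans_lt hdeg23
  have hlt0 : ∀ i, i ≠ i0 → (α i).natDegree < (α i0).natDegree := by
    intro i h0
    by_cases h1 : i = i1
    · rw [h1]; exact hdeg12
    · exact (hlt1 i h0 h1).trans hdeg12
  have hcoef : ∀ (i j : Fin d) (c : ℂ), (α i).natDegree < (α j).natDegree →
      (C c * α i ^ n).coeff (n * (α j).natDegree) = 0 := by
    intro i j c hij
    apply coeff_eq_zero_of_natDegree_lt
    refine (natDegree_C_mul_le _ _).trans_lt ?_
    rw [natDegree_pow]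
    exact Nat.mul_lt_mul_of_pos_left hij hn
  have hcoef1 : ∀ (j : Fin d) (c : ℂ),
      (C c * α j ^ n).coeff (n * (α j).natDegree) = c * (α j).leadingCoeff ^ n := by
    intro j c
    rw [coeff_C_mul, coeff_pow_mul_natDegree]
  have hlc : ∀ j, (α j).leadingCoeff ^ n ≠ 0 := fun j =>
    pow_ne_zero _ (leadingCoeff_ne_zero.mpr (hα j))
  set r : ℂ[X] := ∑ i ∈ Finset.univ.erase i0, C (a i) * α i ^ n with hrdef
  have hsplit : C (a i0) * α i0 ^ n + r = h ^ m := by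
    rw [← heq, hrdef]
    exact Finset.add_sum_erase Finset.univ (fun i => C (a i) * α i ^ n) (Finset.mem_univ i0)
  have hi10 : i1 ≠ i0 := by
    intro hx
    have := congrArg Fin.val hx
    simp [hi0, hi1] at this
  have hr0 : r ≠ 0 := by
    intro hr0
    have h1 := congrArg (fun q => coeff q (n * (α i1).natDegree)) hr0
    simp only [hrdef, finsetSum_coeff, coeff_zero] at h1
    rw [Finset.sum_eq_single i1, hcoef1] at h1
    · exact mul_ne_zero (ha i1) (hlc i1) h1
    · intro i hi hii
      exact hcoef i i1 _ (hlt1 i (Finset.ne_of_mem_erase hi) hii)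
    · intro hx
      exact absurd (Finset.mem_erase.mpr ⟨hi10, Finset.mem_univ _⟩) hx
  have hrdeg : r.natDegree + n ≤ n * (α i0).natDegree := by
    have h1 : r.natDegree ≤ n * ((α i0).natDegree - 1) := by
      apply natDegree_sum_le_of_forall_le
      intro i hi
      refine (natDegree_C_mul_le _ _).trans ?_
      rw [natDegree_pow]
      have := hlt0 i (Finset.ne_of_mem_erase hi)
      exact Nat.mul_le_mul_left _ (by omega)
    have h2 : n * ((α i0).natDegree - 1) + n = n * (α i0).natDegree := by
      obtain ⟨D, hD⟩ : ∃ D, (α i0).natDegree = D + 1 := ⟨(α i0).natDegree - 1, by omega⟩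
      rw [hD]; simp; ring
    omega
  have htop : (h ^ m).coeff (n * (α i0).natDegree) = a i0 * (α i0).leadingCoeff ^ n := by
    rw [← hsplit, coeff_add, hcoef1, coeff_eq_zero_of_natDegree_lt (p := r) (by omega), add_zero]
  have hdeg : m * h.natDegree = n * (α i0).natDegree := by
    rw [← natDegree_pow]
    apply le_antisymm
    · rw [← hsplit]
      refine (natDegree_add_le _ _).trans (max_le ?_ (by omega))
      refine (natDegree_C_mul_le _ _).trans ?_
      rw [natDegree_pow]
    · apply le_natDegree_of_ne_zero
      rw [htop]
      exact mul_ne_zero (ha i0) (hlc i0)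
  have hDsum : (α i0).natDegree ≤ ∑ i, (α i).natDegree :=
    Finset.single_le_sum (f := fun i => (α i).natDegree) (fun _ _ => Nat.zero_le _)
      (Finset.mem_univ i0)
  rcases lt_or_ge m d with hmd | hmd
  · have h1 := first_bound (α i0) r h (a i0) n m (by omega) hn hm hr0 hrdeg hh0 hdeg hsplit
    calc n ≤ (α i0).natDegree * m := h1
      _ ≤ (∑ i, (α i).natDegree) * (d * (d + 1)) :=
        Nat.mul_le_mul hDsum (by nlinarith)
      _ = _ := by ring
  · obtain ⟨e, σ, c, hσ, hc, hli, hrep⟩ := exists_indep_rep (fun i => α i ^ n) a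
    rw [heq] at hrep
    have hed : e ≤ d := by simpa using Fintype.card_le_of_injective σ hσ
    have hex0 : ∃ j, σ j = i0 := by
      by_contra! hcon
      rw [← hrep, finsetSum_coeff, Finset.sum_eq_zero] at htop
      · exact mul_ne_zero (ha i0) (hlc i0) htop.symm
      · intro i _
        exact hcoef _ _ _ (hlt0 _ (hcon i))
    obtain ⟨j0, hj0⟩ := hex0
    have hex1 : ∃ j, j ≠ j0 := by
      by_contra! hcon
      have hu : (Finset.univ : Finset (Fin e)) = {j0} := by
        ext j; simp [hcon j]
      rw [hu, Finset.sum_singleton, hj0] at hrep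
      rw [← hrep, hcoef1] at htop
      have hca := mul_right_cancel₀ (hlc i0) htop
      rw [hca, ← hsplit] at hrep
      exact hr0 (left_eq_add.mp hrep)
    obtain ⟨j1, hj1⟩ := hex1
    have hb := indep_bound (fun i => α (σ i)) (fun i => hα _) c hc n m hli j0 j1
      (by
        simp only [hj0]
        exact hlt0 _ (fun hx => hj1 (hσ (hx.trans hj0.symm))))
      (hed.trans hmd) h hh0 (by simp only [hj0]; exact hdeg) hrep
    have hs : ∑ i, (α (σ i)).natDegree ≤ ∑ i, (α i).natDegree := by
      rw [← Finset.sum_image (s := Finset.univ) (g := σ) (f := fun i => (α i).natDegree)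
        (fun _ _ _ _ hxy => hσ hxy)]
      exact Finset.sum_le_sum_of_subset (Finset.subset_univ _)
    refine hb.trans (Nat.mul_le_mul (Nat.mul_le_mul hed (by omega)) hs)
end

section
/- Let φ₁, …, φ_n ∈ ℂ(x) be nonzero rational functions that are linearly independent over ℂ, let r ∈ {0, 1, …, n}, and let S be a finite set of places of ℂ(x) (i.e., points c ∈ ℂ together with possibly the place ∞) containing all poles of φ₁, …, φ_n and all zeros of φ₁, …, φ_r. Put σ = φ₁ + ⋯ + φ_n (which is nonzero by linear independence). Then Σ_{ν ∈ S} ( ν(σ) − min_{1≤i≤n} ν(φ_i) ) ≤ C(n,2)·(|S| − 2) + Σ_{i=r+1}^{n} H(φ_i), where C(n,2) = n(n−1)/2. -/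
/-- The places of `ℂ(x)`: a finite place `some c` for each point `c ∈ ℂ`, and the infinite
place `none`.  `placeVal v f` is the corresponding (additive, normalized) valuation of `f`:
at a finite place `c` it is the order of vanishing of `f` at `c` (negative at poles), and at
the infinite place it is `deg (denom f) − deg (num f)`.  (For `f = 0` these conventions give
`0`, but the theorem below only evaluates it at nonzero functions.) -/
noncomputable def placeVal : Option ℂ → RatFunc ℂ → ℤ
  | none => fun f => (f.denom.natDegree : ℤ) - f.num.natDegree
  | some c => fun f =>
      (Polynomial.rootMultiplicity c f.num : ℤ) - Polynomial.rootMultiplicity c f.denom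

section Wr

open Polynomial

noncomputable def wr {N : ℕ} (p : Fin N → ℂ[X]) : ℂ[X] :=
  (Matrix.of fun (k i : Fin N) => derivative^[(k : ℕ)] (p i)).det

lemma sum_fin_id (N : ℕ) : ∑ k : Fin N, (k : ℕ) = N.choose 2 := by
  rw [Fin.sum_univ_eq_sum_range (fun k => k), Finset.sum_range_id, Nat.choose_two_right]

lemma wr_pow {N : ℕ} (p : Fin N → ℂ[X]) (g : ℂ[X]) :
    (Matrix.of fun (k i : Fin N) => g ^ (k : ℕ) * derivative^[(k : ℕ)] (p i)).det
      = g ^ (N.choose 2) * wr p := by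
  have := Matrix.det_mul_column (fun k : Fin N => g ^ (k : ℕ))
    (Matrix.of fun (k i : Fin N) => derivative^[(k : ℕ)] (p i))
  rw [Finset.prod_pow_eq_pow_sum, sum_fin_id] at this
  exact this

lemma wr_rootMult {N : ℕ} (p : Fin N → ℂ[X]) (hW : wr p ≠ 0) (c : ℂ) :
    ∑ i, rootMultiplicity c (p i) ≤ N.choose 2 + rootMultiplicity c (wr p) := by
  have h : ∀ k i : Fin N, ∃ b, (X - C c) ^ (k : ℕ) * derivative^[(k : ℕ)] (p i)
      = (X - C c) ^ (rootMultiplicity c (p i)) * b := by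
    intro k i
    have h1 := pow_sub_dvd_iterate_derivative_of_pow_dvd (k : ℕ)
      (pow_rootMultiplicity_dvd (p i) c)
    have h2 := mul_dvd_mul (dvd_refl ((X - C c) ^ (k : ℕ))) h1
    rw [← pow_add] at h2
    exact (pow_dvd_pow _ (by omega)).trans h2
  choose b hb using h
  have h1 := wr_pow p (X - C c)
  simp_rw [hb] at h1
  have h2 := Matrix.det_mul_row (fun i => (X - C c) ^ (rootMultiplicity c (p i))) (Matrix.of b)
  simp only [Matrix.of_apply] at h2
  rw [h2, Finset.prod_pow_eq_pow_sum] at h1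
  have h3 : (X - C c) ^ (∑ i, rootMultiplicity c (p i)) ∣ (X - C c) ^ (N.choose 2) * wr p :=
    ⟨_, h1.symm⟩
  have h0 : (X - C c) ^ (N.choose 2) * wr p ≠ 0 :=
    mul_ne_zero (pow_ne_zero _ (X_sub_C_ne_zero c)) hW
  rw [← le_rootMultiplicity_iff h0, rootMultiplicity_mul h0, rootMultiplicity_X_sub_C_pow] at h3
  exact h3

lemma coeff_prod_le {ι : Type*} (s : Finset ι) (f : ι → ℂ[X]) (d : ι → ℕ)
    (h : ∀ i ∈ s, (f i).natDegree ≤ d i) :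
    (∏ i ∈ s, f i).natDegree ≤ ∑ i ∈ s, d i ∧
      (∏ i ∈ s, f i).coeff (∑ i ∈ s, d i) = ∏ i ∈ s, (f i).coeff (d i) := by
  classical
  induction s using Finset.induction_on with
  | empty => simp
  | insert a s ha ih =>
    have := ih (fun i hi => h i (Finset.mem_insert_of_mem hi))
    have h1 := h a (Finset.mem_insert_self _ _)
    rw [Finset.prod_insert ha, Finset.sum_insert ha, Finset.prod_insert ha]
    refine ⟨natDegree_mul_le_of_le h1 this.1, ?_⟩
    rw [coeff_mul_add_eq_of_natDegree_le h1 this.1, this.2]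

lemma det_le {N : ℕ} (M : Matrix (Fin N) (Fin N) ℂ[X]) (d : Fin N → ℕ)
    (h : ∀ k i, (M k i).natDegree ≤ d i) :
    M.det.natDegree ≤ ∑ i, d i ∧
      M.det.coeff (∑ i, d i) = (Matrix.of fun k i => (M k i).coeff (d i)).det := by
  have key := fun σ : Equiv.Perm (Fin N) => coeff_prod_le Finset.univ (fun i => M (σ i) i) d
    (fun i _ => h _ _)
  constructor
  · rw [Matrix.det_apply]
    refine natDegree_sum_le_of_forall_le _ _ fun σ _ => ?_
    exact (natDegree_smul_le _ _).trans (key σ).1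
  · rw [Matrix.det_apply, Matrix.det_apply, finsetSum_coeff]
    refine Finset.sum_congr rfl fun σ _ => ?_
    rw [coeff_smul, (key σ).2]
    rfl

lemma entry_le (p : ℂ[X]) (k : ℕ) : (X ^ k * derivative^[k] p).natDegree ≤ p.natDegree := by
  by_cases hk : p.natDegree < k
  · simp [iterate_derivative_eq_zero hk]
  · have := natDegree_iterate_derivative p k
    refine (natDegree_mul_le_of_le (natDegree_X_pow_le k) this).trans (by omega)

lemma entry_coeff (p : ℂ[X]) (k : ℕ) : (X ^ k * derivative^[k] p).coeff p.natDegree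
    = p.leadingCoeff * (descPochhammer ℂ k).eval (p.natDegree : ℂ) := by
  rw [descPochhammer_eval_eq_descFactorial]
  by_cases hk : p.natDegree < k
  · simp [iterate_derivative_eq_zero hk, Nat.descFactorial_eq_zero_iff_lt.2 hk]
  · obtain ⟨m, hm⟩ := Nat.exists_eq_add_of_le (not_lt.1 hk)
    rw [leadingCoeff, hm, add_comm k m, coeff_X_pow_mul, coeff_iterate_derivative]
    simp [mul_comm]

lemma wr_natDegree {N : ℕ} (p : Fin N → ℂ[X]) (hW : wr p ≠ 0) :
    N.choose 2 + (wr p).natDegree ≤ ∑ i, (p i).natDegree := by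
  have := (det_le _ (fun i => (p i).natDegree) (fun k i => entry_le (p i) (k : ℕ))).1
  erw [wr_pow] at this
  rwa [natDegree_mul (pow_ne_zero _ X_ne_zero) hW, natDegree_X_pow] at this

lemma wr_ne_zero_of_inj {N : ℕ} (p : Fin N → ℂ[X]) (h0 : ∀ i, p i ≠ 0)
    (hinj : Function.Injective fun i => (p i).natDegree) : wr p ≠ 0 := by
  have := (det_le _ (fun i => (p i).natDegree) (fun k i => entry_le (p i) (k : ℕ))).2
  erw [wr_pow] at this
  intro hW
  rw [hW] at this
  simp only [mul_zero, coeff_zero, entry_coeff] at this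
  have h2 := Matrix.det_mul_row (fun i => (p i).leadingCoeff)
    (Matrix.of fun (k i : Fin N) => (descPochhammer ℂ k).eval ((p i).natDegree : ℂ))
  simp only [Matrix.of_apply] at h2
  rw [h2] at this
  have h3 := Matrix.det_eval_matrixOfPolynomials_eq_det_vandermonde
    (fun i : Fin N => ((p i).natDegree : ℂ)) (fun k => descPochhammer ℂ (k : ℕ))
    (fun i => descPochhammer_natDegree ..) (fun i => monic_descPochhammer ℂ _)
  rw [← Matrix.det_transpose] at h3
  rw [← Matrix.det_transpose (Matrix.of _)] at h3
  have h4 : (Matrix.vandermonde fun i : Fin N => ((p i).natDegree : ℂ)).det ≠ 0 := by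
    rw [Matrix.det_vandermonde_ne_zero_iff]
    intro a b hab
    exact hinj (Nat.cast_injective (R := ℂ) hab)
  rw [← Matrix.det_transpose, h3] at h4
  rcases mul_eq_zero.1 this.symm with h | h
  · obtain ⟨i, -, hi⟩ := Finset.prod_eq_zero_iff.1 h
    exact h0 i (leadingCoeff_eq_zero.1 hi)
  · exact h4 h

lemma wr_update_sum {N : ℕ} (p : Fin N → ℂ[X]) (j : Fin N) :
    wr (Function.update p j (∑ i, p i)) = wr p := by
  have := Matrix.det_updateCol_sum
    (Matrix.of fun (k i : Fin N) => derivative^[(k : ℕ)] (p i)) j (fun _ => 1)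
  simp only [one_smul] at this
  rw [wr, wr, ← this]
  congr 1
  ext1 k i
  by_cases h : i = j
  · subst h; simp [iterate_derivative_sum]
  · simp [h]

lemma wr_update_add {N : ℕ} (p : Fin N → ℂ[X]) {i j : Fin N} (hij : i ≠ j) (c : ℂ) :
    wr (Function.update p i (p i + c • p j)) = wr p := by
  have := Matrix.det_updateCol_add_smul_self
    (Matrix.of fun (k i : Fin N) => derivative^[(k : ℕ)] (p i)) hij (C c)
  rw [wr, wr, ← this]
  congr 1
  ext1 k l
  by_cases h : l = i
  · subst h; simp [smul_eq_C_mul]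
  · simp [h]

lemma li_update_add {N : ℕ} (p : Fin N → ℂ[X]) (hp : LinearIndependent ℂ p)
    {i j : Fin N} (hij : i ≠ j) (c : ℂ) :
    LinearIndependent ℂ (Function.update p i (p i + c • p j)) := by
  rw [Fintype.linearIndependent_iff] at hp ⊢
  intro g hg
  have h1 : ∑ l, (g l + if l = j then c * g i else 0) • p l = 0 := by
    rw [← hg]
    have h2 : ∀ l, g l • Function.update p i (p i + c • p j) l
        = g l • p l + if l = i then (g i * c) • p j else 0 := by
      intro l
      by_cases h : l = i
      · subst h; simp [smul_smul]
      · simp [h]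
    simp_rw [h2, add_smul, Finset.sum_add_distrib]
    simp [ite_smul, mul_comm]
  have h3 := hp _ h1
  have hi : g i = 0 := by simpa [hij] using h3 i
  intro l
  simpa [hi] using h3 l

lemma reduce {N m : ℕ} : ∀ (s : ℕ) (p : Fin N → ℂ[X]), LinearIndependent ℂ p →
    ∑ i, (p i).natDegree = s → (∀ i, (p i).natDegree ≤ m) →
    ∃ q : Fin N → ℂ[X], (∀ i, q i ≠ 0) ∧ (Function.Injective fun i => (q i).natDegree) ∧
      (∀ i, (q i).natDegree ≤ m) ∧ wr q = wr p := by
  intro s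
  induction s using Nat.strong_induction_on with
  | _ s ih =>
  intro p hp hs hm
  by_cases hinj : Function.Injective fun i => (p i).natDegree
  · exact ⟨p, fun i => hp.ne_zero i, hinj, hm, rfl⟩
  simp only [Function.Injective, not_forall] at hinj
  obtain ⟨i, j, hd, hij⟩ := hinj
  set c : ℂ := -(p i).leadingCoeff / (p j).leadingCoeff with hc
  have hj0 : (p j).leadingCoeff ≠ 0 := leadingCoeff_ne_zero.2 (hp.ne_zero j)
  have hi0 : (p i).leadingCoeff ≠ 0 := leadingCoeff_ne_zero.2 (hp.ne_zero i)
  have hc0 : c ≠ 0 := div_ne_zero (neg_ne_zero.2 hi0) hj0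
  have hli := li_update_add p hp hij c
  have hne : p i + c • p j ≠ 0 := by simpa using hli.ne_zero i
  have hlt : (p i + c • p j).natDegree < (p i).natDegree := by
    have hle : (p i + c • p j).natDegree ≤ (p i).natDegree :=
      natDegree_add_le_of_degree_le le_rfl ((natDegree_smul_le _ _).trans hd.ge)
    refine lt_of_le_of_ne hle fun heq => ?_
    apply hne
    rw [← leadingCoeff_eq_zero, leadingCoeff, heq, coeff_add, coeff_smul]
    conv_lhs => rw [coeff_natDegree, hd, coeff_natDegree, smul_eq_mul, hc]
    field_simp
    ring
  have hpt : ∀ l, (Function.update p i (p i + c • p j) l).natDegree ≤ (p l).natDegree := by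
    intro l
    by_cases h : l = i
    · subst h; simpa using hlt.le
    · simp [h]
  obtain ⟨q, h1, h2, h3, h4⟩ := ih _ (by
    rw [← hs]
    exact Finset.sum_lt_sum (fun l _ => hpt l) ⟨i, Finset.mem_univ _, by simpa using hlt⟩)
    _ hli rfl (fun l => (hpt l).trans (hm l))
  exact ⟨q, h1, h2, h3, h4.trans (wr_update_add p hij c)⟩

lemma inj_sum {N : ℕ} (e : Fin N → ℕ) (he : Function.Injective e) :
    N.choose 2 ≤ ∑ i, e i := by
  have := Finset.sum_range_le_sum (s := (Finset.univ.image fun i => (e i : ℤ))) (c := 0)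
    (by simp)
  have hinj : Function.Injective fun i => (e i : ℤ) := fun a b h => he (Nat.cast_injective (R := ℤ) h)
  rw [Finset.card_image_of_injective _ hinj, Finset.sum_image (fun a _ b _ h => hinj h)] at this
  rw [← sum_fin_id, Fin.sum_univ_eq_sum_range (fun k => k)]
  simp only [zero_add, Finset.card_univ, Fintype.card_fin] at this
  zify
  exact this

lemma wr_ne_zero {N : ℕ} (p : Fin N → ℂ[X]) (hp : LinearIndependent ℂ p) : wr p ≠ 0 := by
  obtain ⟨q, h1, h2, -, h4⟩ := reduce (m := ∑ i, (p i).natDegree) _ p hp rfl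
    (fun i => Finset.single_le_sum (f := fun i => (p i).natDegree) (by simp) (Finset.mem_univ i))
  exact h4 ▸ wr_ne_zero_of_inj q h1 h2

lemma wr_natDegree' {N m : ℕ} (p : Fin N → ℂ[X]) (hp : LinearIndependent ℂ p)
    (hm : ∀ i, (p i).natDegree ≤ m) : 2 * N.choose 2 + (wr p).natDegree ≤ N * m := by
  obtain ⟨q, h1, h2, h3, h4⟩ := reduce _ p hp rfl hm
  have hW := wr_ne_zero_of_inj q h1 h2
  have h5 := wr_natDegree q hW
  have h6 := inj_sum (fun i => m - (q i).natDegree) (fun a b h => h2 (by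
    have := h3 a; have := h3 b; simp only at h ⊢; omega))
  have h7 : ∑ i, (m - (q i).natDegree) + ∑ i, (q i).natDegree = N * m := by
    rw [← Finset.sum_add_distrib]
    rw [Finset.sum_congr rfl (fun i _ => Nat.sub_add_cancel (h3 i))]
    simp
  rw [← h4]
  omega

lemma sum_rm_le (T : Finset ℂ) (p : ℂ[X]) :
    ∑ c ∈ T, (rootMultiplicity c p : ℤ) ≤ p.natDegree := by
  classical
  have h : ∑ c ∈ T, p.roots.count c ≤ p.roots.card := by
    rw [← Multiset.sum_count_eq_card (s := T ∪ p.roots.toFinset) (m := p.roots)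
      (fun a ha => Finset.mem_union_right _ (Multiset.mem_toFinset.2 ha))]
    exact Finset.sum_le_sum_of_subset Finset.subset_union_left
  simp only [count_roots] at h
  exact_mod_cast h.trans (card_roots' p)

lemma sum_rm_eq (T : Finset ℂ) (p : ℂ[X]) (hp : p ≠ 0)
    (h : ∀ c, 0 < rootMultiplicity c p → c ∈ T) :
    ∑ c ∈ T, (rootMultiplicity c p : ℤ) = p.natDegree := by
  classical
  have h1 : ∑ c ∈ T, p.roots.count c = p.roots.card :=
    Multiset.sum_count_eq_card (fun a ha => h a (by
      rw [← count_roots]; exact Multiset.count_pos.2 ha))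
  simp only [count_roots] at h1
  rw [splits_iff_card_roots.1 (IsAlgClosed.splits p)] at h1
  exact_mod_cast h1

lemma placeVal_some (f : RatFunc ℂ) (p q : ℂ[X]) (hp : p ≠ 0) (hq : q ≠ 0)
    (h : f = algebraMap _ _ p / algebraMap _ _ q) (c : ℂ) :
    placeVal (some c) f = (rootMultiplicity c p : ℤ) - rootMultiplicity c q := by
  have h1 := (RatFunc.num_mul_eq_mul_denom_iff hq).2 h
  have h2 := mul_ne_zero hp (RatFunc.denom_ne_zero f)
  have h3 := congrArg (rootMultiplicity c) h1
  rw [rootMultiplicity_mul h2, rootMultiplicity_mul (h1 ▸ h2)] at h3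
  simp only [placeVal]
  omega

lemma placeVal_none (f : RatFunc ℂ) (p q : ℂ[X]) (hp : p ≠ 0) (hq : q ≠ 0)
    (h : f = algebraMap _ _ p / algebraMap _ _ q) :
    placeVal none f = (q.natDegree : ℤ) - p.natDegree := by
  have h1 := (RatFunc.num_mul_eq_mul_denom_iff hq).2 h
  have h2 := mul_ne_zero hp (RatFunc.denom_ne_zero f)
  have h3 := congrArg natDegree h1
  have h4 : f.num ≠ 0 := fun h0 => by
    rw [h0, zero_mul] at h1
    exact h2 h1.symm
  rw [natDegree_mul hp (RatFunc.denom_ne_zero f), natDegree_mul h4 hq] at h3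
  simp only [placeVal]
  omega

lemma rm_cop (f : RatFunc ℂ) (c : ℂ) :
    rootMultiplicity c f.num = 0 ∨ rootMultiplicity c f.denom = 0 := by
  by_contra! h
  have h1 := (rootMultiplicity_pos'.1 (Nat.pos_of_ne_zero h.1)).2
  have h2 := (rootMultiplicity_pos'.1 (Nat.pos_of_ne_zero h.2)).2
  obtain ⟨a, b, hab⟩ := RatFunc.isCoprime_num_denom f
  have := congrArg (eval c) hab
  simp [h1.eq_zero, h2.eq_zero] at this

lemma sum_split (S : Finset (Option ℂ)) (f : Option ℂ → ℤ) :
    ∑ v ∈ S, f v = ∑ c ∈ S.eraseNone, f (some c) + if none ∈ S then f none else 0 := by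
  classical
  by_cases h : none ∈ S
  · have := Finset.sum_insertNone f S.eraseNone
    rw [Finset.insertNone_eraseNone, Finset.insert_eq_of_mem h] at this
    simp [this, h, add_comm]
  · have h1 := Finset.map_some_eraseNone S
    rw [Finset.erase_eq_of_notMem h] at h1
    conv_lhs => rw [← h1]
    rw [Finset.sum_map, if_neg h, add_zero]
    rfl

lemma pole_bound (f : RatFunc ℂ) (S : Finset (Option ℂ))
    (hpoles : ∀ v, placeVal v f < 0 → v ∈ S) :
    -∑ v ∈ S, placeVal v f ≤ (max f.num.natDegree f.denom.natDegree : ℤ) := by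
  rw [sum_split]
  have h1 : ∑ c ∈ S.eraseNone, (rootMultiplicity c f.denom : ℤ) = f.denom.natDegree :=
    sum_rm_eq _ _ (RatFunc.denom_ne_zero f) fun c hc => by
      rw [Finset.mem_eraseNone]
      apply hpoles
      have := rm_cop f c
      simp only [placeVal]
      omega
  have h2 : 0 ≤ ∑ c ∈ S.eraseNone, (rootMultiplicity c f.num : ℤ) :=
    Finset.sum_nonneg fun _ _ => by positivity
  simp only [placeVal, Finset.sum_sub_distrib, h1]
  have h3 := le_max_left (f.num.natDegree : ℤ) f.denom.natDegree
  have h4 := le_max_right (f.num.natDegree : ℤ) f.denom.natDegree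
  split_ifs <;> linarith

lemma unit_sum (f : RatFunc ℂ) (hf : f ≠ 0) (S : Finset (Option ℂ))
    (hpoles : ∀ v, placeVal v f < 0 → v ∈ S) (hzeros : ∀ v, 0 < placeVal v f → v ∈ S) :
    ∑ v ∈ S, placeVal v f = 0 := by
  rw [sum_split]
  have h1 : ∑ c ∈ S.eraseNone, (rootMultiplicity c f.denom : ℤ) = f.denom.natDegree :=
    sum_rm_eq _ _ (RatFunc.denom_ne_zero f) fun c hc => by
      rw [Finset.mem_eraseNone]
      apply hpoles
      have := rm_cop f c
      simp only [placeVal]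
      omega
  have h2 : ∑ c ∈ S.eraseNone, (rootMultiplicity c f.num : ℤ) = f.num.natDegree :=
    sum_rm_eq _ _ (RatFunc.num_ne_zero hf) fun c hc => by
      rw [Finset.mem_eraseNone]
      apply hzeros
      have := rm_cop f c
      simp only [placeVal]
      omega
  have h3 : none ∉ S → placeVal none f = 0 := fun h =>
    le_antisymm (not_lt.1 fun h' => h (hzeros _ h')) (not_lt.1 fun h' => h (hpoles _ h'))
  simp only [placeVal, Finset.sum_sub_distrib, h1, h2] at h3 ⊢
  split_ifs with h
  · ring
  · linarith [h3 h]

lemma common_denom {N : ℕ} (φ : Fin N → RatFunc ℂ) (hφ : ∀ i, φ i ≠ 0) :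
    ∃ (q : ℂ[X]) (p : Fin N → ℂ[X]), q ≠ 0 ∧ (∀ i, p i ≠ 0) ∧
      (∀ i, φ i = algebraMap _ _ (p i) / algebraMap _ _ q) ∧
      ∀ c, 0 < rootMultiplicity c q → ∃ i, 0 < rootMultiplicity c (φ i).denom := by
  classical
  have hq : ∏ i, (φ i).denom ≠ 0 := Finset.prod_ne_zero_iff.2 fun i _ => RatFunc.denom_ne_zero _
  refine ⟨∏ i, (φ i).denom, fun i => (φ i).num * ∏ j ∈ Finset.univ.erase i, (φ j).denom, hq,
    fun i => mul_ne_zero (RatFunc.num_ne_zero (hφ i))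
      (Finset.prod_ne_zero_iff.2 fun i _ => RatFunc.denom_ne_zero _), fun i => ?_, fun c hc => ?_⟩
  · rw [← RatFunc.num_mul_eq_mul_denom_iff hq,
      ← Finset.mul_prod_erase _ _ (Finset.mem_univ i)]
    ring
  · have h := (rootMultiplicity_pos hq).1 hc
    rw [IsRoot, eval_prod, Finset.prod_eq_zero_iff] at h
    obtain ⟨i, -, hi⟩ := h
    exact ⟨i, (rootMultiplicity_pos (RatFunc.denom_ne_zero _)).2 hi⟩

lemma algebraMap_smul_aux (a : ℂ) (p : ℂ[X]) :
    algebraMap ℂ[X] (RatFunc ℂ) (a • p) = a • algebraMap ℂ[X] (RatFunc ℂ) p := by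
  rw [Algebra.algebraMap_eq_smul_one, Algebra.algebraMap_eq_smul_one, smul_assoc]

lemma li_num {N : ℕ} (φ : Fin N → RatFunc ℂ) (hli : LinearIndependent ℂ φ) (q : ℂ[X])
    (p : Fin N → ℂ[X]) (h : ∀ i, φ i = algebraMap _ _ (p i) / algebraMap _ _ q) :
    LinearIndependent ℂ p := by
  rw [Fintype.linearIndependent_iff] at hli ⊢
  intro g hg
  apply hli g
  have h1 := congrArg (algebraMap ℂ[X] (RatFunc ℂ)) hg
  rw [map_sum, map_zero] at h1
  have h2 : ∀ i, g i • φ i = algebraMap ℂ[X] (RatFunc ℂ) (g i • p i) / algebraMap _ _ q := by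
    intro i
    rw [h i, algebraMap_smul_aux, smul_div_assoc]
  simp_rw [h2]
  rw [← Finset.sum_div, h1, zero_div]

lemma main_bound (n : ℕ) (φ : Fin (n + 1) → RatFunc ℂ) (hφ : ∀ i, φ i ≠ 0)
    (hli : LinearIndependent ℂ φ) (S : Finset (Option ℂ))
    (hpoles : ∀ i : Fin (n + 1), ∀ v : Option ℂ, placeVal v (φ i) < 0 → v ∈ S) :
    ∑ v ∈ S, (placeVal v (∑ i, φ i) -
        Finset.univ.inf' Finset.univ_nonempty (fun i => placeVal v (φ i))
        + ∑ i, placeVal v (φ i)) ≤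
      ((n + 1).choose 2 : ℤ) * ((S.card : ℤ) - 2) := by
  obtain ⟨q, p, hq, hp, hpq, hqS⟩ := common_denom φ hφ
  have hlip := li_num φ hli q p hpq
  have hW := wr_ne_zero p hlip
  have hs : ∑ i, p i ≠ 0 := by
    intro h
    have := Fintype.linearIndependent_iff.1 hlip (fun _ => 1) (by simpa using h) 0
    exact one_ne_zero this
  have hσ : ∑ i, φ i = algebraMap _ _ (∑ i, p i) / algebraMap _ _ q := by
    rw [map_sum, Finset.sum_div]
    exact Finset.sum_congr rfl fun i _ => hpq i
  have hsplit : ∀ (F : ℂ[X] → ℤ) (j : Fin (n + 1)),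
      ∑ i, F (Function.update p j (∑ i, p i) i) = F (∑ i, p i) - F (p j) + ∑ i, F (p i) := by
    intro F j
    rw [← Finset.add_sum_erase _ _ (Finset.mem_univ j),
      ← Finset.add_sum_erase _ (fun i => F (p i)) (Finset.mem_univ j)]
    rw [Finset.sum_congr (g := fun i => F (p i)) rfl]
    · simp
      ring
    · intro i hi
      simp [Finset.ne_of_mem_erase hi]
  set T := S.eraseNone with hT
  set B := ((n + 1).choose 2) with hB
  have hqT : ∑ c ∈ T, (rootMultiplicity c q : ℤ) = q.natDegree :=
    sum_rm_eq _ _ hq fun c hc => by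
      obtain ⟨i, hi⟩ := hqS c hc
      rw [hT, Finset.mem_eraseNone]
      apply hpoles i
      have := rm_cop (φ i) c
      simp only [placeVal]
      omega
  have hWT := sum_rm_le T (wr p)
  -- finite places
  have hfin : ∀ c : ℂ, placeVal (some c) (∑ i, φ i) -
        Finset.univ.inf' Finset.univ_nonempty (fun i => placeVal (some c) (φ i))
        + ∑ i, placeVal (some c) (φ i) ≤
        B + rootMultiplicity c (wr p) - (n + 1) * rootMultiplicity c q := by
    intro c
    obtain ⟨j, -, hj⟩ := Finset.exists_mem_eq_inf' (s := Finset.univ) Finset.univ_nonempty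
      (fun i => placeVal (some c) (φ i))
    rw [hj, placeVal_some _ _ q hs hq hσ]
    simp only [fun i => placeVal_some _ _ q (hp i) hq (hpq i) c]
    have h1 := wr_rootMult (Function.update p j (∑ i, p i)) (by rwa [wr_update_sum]) c
    rw [wr_update_sum] at h1
    have h2 := hsplit (fun f => (rootMultiplicity c f : ℤ)) j
    zify at h1
    rw [h2] at h1
    rw [Finset.sum_sub_distrib]
    simp only [Finset.sum_const, Finset.card_univ, Fintype.card_fin, nsmul_eq_mul]
    push_cast
    linarith
  have hsum := Finset.sum_le_sum (s := T) (fun c _ => hfin c)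
  have hR : ∑ c ∈ T, ((B : ℤ) + rootMultiplicity c (wr p) - (n + 1) * rootMultiplicity c q)
      = T.card * B + ∑ c ∈ T, (rootMultiplicity c (wr p) : ℤ) - (n + 1) * q.natDegree := by
    rw [Finset.sum_sub_distrib, Finset.sum_add_distrib, ← Finset.mul_sum, hqT]
    simp only [Finset.sum_const, nsmul_eq_mul]
  rw [hR] at hsum
  have hcard : (S.card : ℤ) = T.card + if none ∈ S then 1 else 0 := by
    have := sum_split S (fun _ => 1)
    simpa using this
  rw [sum_split, hcard]
  by_cases hinf : none ∈ S
  · simp only [hinf, if_true]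
    have h0 : placeVal none (∑ i, φ i) -
        Finset.univ.inf' Finset.univ_nonempty (fun i => placeVal none (φ i))
        + ∑ i, placeVal none (φ i) ≤ (n + 1) * q.natDegree - B - (wr p).natDegree := by
      obtain ⟨j, -, hj⟩ := Finset.exists_mem_eq_inf' (s := Finset.univ) Finset.univ_nonempty
        (fun i => placeVal none (φ i))
      rw [hj, placeVal_none _ _ q hs hq hσ]
      simp only [fun i => placeVal_none _ _ q (hp i) hq (hpq i)]
      have h1 := wr_natDegree (Function.update p j (∑ i, p i)) (by rwa [wr_update_sum])
      rw [wr_update_sum] at h1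
      have h2 := hsplit (fun f => (natDegree f : ℤ)) j
      zify at h1
      rw [h2] at h1
      rw [Finset.sum_sub_distrib]
      simp only [Finset.sum_const, Finset.card_univ, Fintype.card_fin, nsmul_eq_mul]
      push_cast
      linarith
    linarith
  · simp only [hinf, if_false]
    have h1 := wr_natDegree' p hlip (m := q.natDegree) fun i => by
      have h2 : ¬ placeVal none (φ i) < 0 := fun h => hinf (hpoles i _ h)
      rw [placeVal_none _ _ q (hp i) hq (hpq i)] at h2
      omega
    zify at h1
    linarith

end Wr

/-- **Zannier's function-field subspace theorem, genus-0 instance for `ℂ(x)`.**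
Let `φ₀, …, φ_n ∈ ℂ(x)` be nonzero and linearly independent over `ℂ`, let `r ≤ n + 1`, and
let `S` be a finite set of places of `ℂ(x)` containing all poles of all the `φ i` and all
zeros of `φ i` for `i < r`.  With `σ = ∑ i, φ i` one has
`∑_{v ∈ S} (v(σ) − min_i v(φ i)) ≤ C(n+1, 2)·(|S| − 2) + ∑_{i ≥ r} H(φ i)`,
where `H(φ) = max (deg num) (deg denom)` is the height. -/
theorem stmt11 (n : ℕ) (φ : Fin (n + 1) → RatFunc ℂ) (hφ : ∀ i, φ i ≠ 0)
    (hli : LinearIndependent ℂ φ) (r : ℕ) (hr : r ≤ n + 1)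
    (S : Finset (Option ℂ))
    (hpoles : ∀ i : Fin (n + 1), ∀ v : Option ℂ, placeVal v (φ i) < 0 → v ∈ S)
    (hzeros : ∀ i : Fin (n + 1), (i : ℕ) < r → ∀ v : Option ℂ,
      0 < placeVal v (φ i) → v ∈ S) :
    ∑ v ∈ S, (placeVal v (∑ i, φ i) -
        Finset.univ.inf' Finset.univ_nonempty (fun i => placeVal v (φ i))) ≤
      ((n + 1).choose 2 : ℤ) * ((S.card : ℤ) - 2) +
        ∑ i ∈ Finset.univ.filter (fun i : Fin (n + 1) => r ≤ (i : ℕ)),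
          (max (φ i).num.natDegree (φ i).denom.natDegree : ℤ) := by
  have h := main_bound n φ hφ hli S hpoles
  rw [Finset.sum_add_distrib, Finset.sum_comm] at h
  have h2 : -∑ i, ∑ v ∈ S, placeVal v (φ i) ≤
      ∑ i ∈ Finset.univ.filter (fun i : Fin (n + 1) => r ≤ (i : ℕ)),
          (max (φ i).num.natDegree (φ i).denom.natDegree : ℤ) := by
    rw [← Finset.sum_neg_distrib, Finset.sum_filter]
    refine Finset.sum_le_sum fun i _ => ?_
    split_ifs with hi
    · exact pole_bound (φ i) S (hpoles i)
    · rw [unit_sum (φ i) (hφ i) S (hpoles i) (hzeros i (not_le.1 hi)), neg_zero]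
  linarith
end
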